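/- For every integer n ≥ 1, let Y_n denote the set of smooth functions h : [0,1] → S^1 with ‖h‖_{W^{1,1}} ≤ 1 + πn, topologized by the L^1-norm. Then there is no continuous map β : S^{2n} → Y_n with β(−x) = −β(x) for all x ∈ S^{2n} (where −β(x) denotes the pointwise negation of the function β(x)); that is, the ℤ/2-coindex of Y_n is at most 2n − 1. -/

import Mathlib

open MeasureTheory

/-- Membership in `Y_n`: `h` is smooth on `[0,1]`, circle-valued there, and
`‖h‖_{W^{1,1}} ≤ 1 + π n`. -/
def MemYn (n : ℕ) (h : ℝ → ℂ) : Prop :=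
  ContDiffOn ℝ (⊤ : ℕ∞) h (Set.Icc 0 1) ∧
  (∀ x ∈ Set.Icc (0:ℝ) 1, ‖h x‖ = 1) ∧
  (∫ x in (0:ℝ)..1, ‖h x‖) + (∫ x in (0:ℝ)..1, ‖derivWithin h (Set.Icc 0 1) x‖)
    ≤ 1 + Real.pi * n

/-!
Integrating `β x` over the intervals `[j/n, (j+1)/n]` gives a continuous odd map `S^{2n} → ℂ^n`,
which vanishes at some `x` by the Borsuk–Ulam theorem. On the other hand, a curve in the unit sphere
whose length is at most `π` stays in the closed half-space around its point of half length, so its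
mean is nonzero. Hence `β x` has length more than `π` on each of the `n` intervals, more than `π n`
in total, whereas its `W^{1,1}`-bound leaves only `π n` for the length.

The Borsuk–Ulam theorem reduces, by approximation and by compactness, to a system consisting of the
equation of the sphere in `ℝ^{m+1}` and of odd polynomial equations `X_i ^ D + p_i = 0` for
`1 ≤ i ≤ m`, with `D` odd and large compared to the degrees of the `p_i`. The quotient of the
polynomial ring by these equations has a basis of monomials of exponent less than `2` in `X_0` and
less than `D` in the other variables, so its even part has the odd dimension `D ^ m` and thus a
residue field of odd degree over `ℝ`, which must be `ℝ`. A complex solution lying over this residue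
field satisfies `z_i z_j ∈ ℝ` for all `i`, `j`, and together with `∑ z_i² = 1` this makes `z` real.
-/

section LinearAlgebra

theorem bijective_of_forall_exists_one_sub_pow_apply_eq_zero {R M : Type*} [Ring R]
    [AddCommGroup M] [Module R M] {T : M →ₗ[R] M} (hT : ∀ x, ∃ k : ℕ, ((1 - T) ^ k) x = 0) :
    Function.Bijective T := by
  refine ⟨(injective_iff_map_eq_zero T).mpr fun x hx => ?_, fun y => ?_⟩
  · obtain ⟨k, hk⟩ := hT x
    have := LinearMap.congr_fun (geom_sum_mul_neg (1 - T) k) x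
    simpa [hx, hk, eq_comm] using this
  · obtain ⟨k, hk⟩ := hT y
    have := LinearMap.congr_fun (mul_neg_geom_sum (1 - T) k) y
    exact ⟨(∑ i ∈ Finset.range k, (1 - T) ^ i) y, by simpa [hk] using this⟩

variable {ι R M N : Type*} [CommRing R] [AddCommGroup M] [Module R M] [AddCommGroup N] [Module R N]
  (b : Module.Basis ι R M)

theorem eqLocus_id_eq_span_of_diagonal [IsDomain R] {τ : M →ₗ[R] M} {c : ι → R}
    (hτ : ∀ i, τ (b i) = c i • b i) :
    LinearMap.eqLocus τ LinearMap.id = Submodule.span R (b '' {i | c i = 1}) := by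
  have repr_τ (x : M) (i : ι) : b.repr (τ x) i = c i * b.repr x i := by
    have : b.coord i ∘ₗ τ = c i • b.coord i := b.ext fun j => by
      obtain rfl | hij := eq_or_ne j i
      · simp [hτ]
      · simp [hτ, hij]
    exact LinearMap.congr_fun this x
  ext x
  rw [LinearMap.mem_eqLocus, LinearMap.id_apply, b.mem_span_image, ← b.repr.injective.eq_iff,
    Finsupp.ext_iff]
  refine forall_congr' fun i => ?_
  rw [repr_τ, mul_left_eq_self₀, SetLike.mem_coe, Finsupp.mem_support_iff]
  exact or_comm.trans or_iff_not_imp_left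

variable {b} {s : Set ι} {π : M →ₗ[R] N}

theorem map_span_image_of_ker_eq_span (hπ : LinearMap.ker π = Submodule.span R (b '' sᶜ))
    (t : Set ι) :
    (Submodule.span R (b '' t)).map π =
      Submodule.span R (Set.range fun i : ↑(s ∩ t) => π (b i)) := by
  refine le_antisymm ?_ (Submodule.span_le.mpr ?_)
  · rw [Submodule.map_span_le]
    rintro _ ⟨i, hi, rfl⟩
    by_cases his : i ∈ s
    · exact Submodule.subset_span ⟨⟨i, his, hi⟩, rfl⟩
    · have : b i ∈ LinearMap.ker π := hπ ▸ Submodule.subset_span ⟨i, his, rfl⟩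
      rw [LinearMap.mem_ker.mp this]
      exact zero_mem _
  · rintro _ ⟨i, rfl⟩
    exact Submodule.mem_map_of_mem (Submodule.subset_span ⟨i, i.2.2, rfl⟩)

theorem linearIndependent_of_ker_eq_span (hπ : LinearMap.ker π = Submodule.span R (b '' sᶜ))
    {t : Set ι} (hts : t ⊆ s) : LinearIndependent R fun i : t => π (b i) := by
  refine (b.linearIndependent.comp ((↑) : t → ι) Subtype.val_injective).map ?_
  rw [hπ, Set.range_comp, Subtype.range_coe]
  exact b.linearIndependent.disjoint_span_image
    (Set.disjoint_compl_right_iff_subset.mpr hts)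

theorem finrank_map_span_image_of_ker_eq_span [Nontrivial R]
    (hπ : LinearMap.ker π = Submodule.span R (b '' sᶜ)) (hs : s.Finite) (t : Set ι) :
    Module.finrank R ((Submodule.span R (b '' t)).map π) = Nat.card ↑(s ∩ t) := by
  have : Fintype ↑(s ∩ t) := (hs.inter_of_left t).fintype
  rw [map_span_image_of_ker_eq_span hπ, Nat.card_eq_fintype_card,
    finrank_span_eq_card (linearIndependent_of_ker_eq_span hπ Set.inter_subset_left)]

theorem finite_of_ker_eq_span (hπ : LinearMap.ker π = Submodule.span R (b '' sᶜ))
    (hs : s.Finite) (hsurj : Function.Surjective π) : Module.Finite R N := by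
  have : Finite ↑(s ∩ Set.univ) := hs.inter_of_left _
  have := map_span_image_of_ker_eq_span hπ Set.univ
  rw [Set.image_univ, b.span_eq, Submodule.map_top, LinearMap.range_eq_top.mpr hsurj] at this
  exact .of_fg_top (this ▸ Submodule.fg_span (Set.finite_range _))

end LinearAlgebra

section LeadingMonomial

open MvPolynomial

variable {σ R : Type*} [CommRing R] {w : σ → ℕ}

variable (R w) in
/-- The polynomials all of whose monomials have `w`-weight less than `k`. -/
noncomputable def weightLT (k : ℕ) : Submodule R (MvPolynomial σ R) :=
  restrictSupport R {m | Finsupp.weight w m < k}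

variable (w) in
/-- `P` is the monomial with exponent `e` plus terms of smaller `w`-weight. -/
def HasLeadingMonomial (e : σ →₀ ℕ) (P : MvPolynomial σ R) : Prop :=
  P - monomial e 1 ∈ weightLT R w (Finsupp.weight w e)

theorem basisMonomials_constr_monomial (P : (σ →₀ ℕ) → MvPolynomial σ R) (e : σ →₀ ℕ) :
    (basisMonomials σ R).constr R P (monomial e 1) = P e :=
  (basisMonomials σ R).constr_basis R P e

theorem weightLT_mono {k l : ℕ} (hkl : k ≤ l) : weightLT R w k ≤ weightLT R w l :=
  restrictSupport_mono _ fun _ hm => lt_of_lt_of_le hm hkl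

theorem monomial_mem_weightLT {e : σ →₀ ℕ} {k : ℕ} (he : Finsupp.weight w e < k) (r : R) :
    monomial e r ∈ weightLT R w k :=
  (monomial_mem_restrictSupport _).mpr (.inl he)

theorem mem_weightLT_of_totalDegree_mul_lt {c k : ℕ} (hw : ∀ i, w i ≤ c) {p : MvPolynomial σ R}
    (hp : p.totalDegree * c < k) : p ∈ weightLT R w k := by
  refine (mem_restrictSupport_iff _).mpr fun m hm => lt_of_le_of_lt ?_ hp
  calc
    Finsupp.weight w m ≤ m.sum fun _ e => e * c :=
      Finset.sum_le_sum fun i _ => Nat.mul_le_mul_left (m i) (hw i)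
    _ = (m.sum fun _ e => e) * c := (Finset.sum_mul ..).symm
    _ ≤ p.totalDegree * c := Nat.mul_le_mul_right c (le_totalDegree hm)

theorem mul_mem_weightLT {k l : ℕ} {P Q : MvPolynomial σ R} (hP : P ∈ weightLT R w k)
    (hQ : Q ∈ weightLT R w (l + 1)) : P * Q ∈ weightLT R w (k + l) := by
  have := Submodule.mul_mem_mul hP hQ
  rw [weightLT, weightLT, ← restrictSupport_add] at this
  refine restrictSupport_mono _ ?_ this
  rintro _ ⟨m, hm, m', hm', rfl⟩
  simp only [Set.mem_ofPred_eq, map_add] at hm hm' ⊢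
  omega

namespace HasLeadingMonomial

theorem mem_weightLT {e : σ →₀ ℕ} {P : MvPolynomial σ R} (hP : HasLeadingMonomial w e P) :
    P ∈ weightLT R w (Finsupp.weight w e + 1) := by
  rw [← sub_add_cancel P (monomial e 1)]
  exact add_mem (weightLT_mono (Nat.le_succ _) hP) (monomial_mem_weightLT (Nat.lt_succ_self _) 1)

protected theorem monomial (e : σ →₀ ℕ) : HasLeadingMonomial w e (monomial e (1 : R)) := by
  simp [HasLeadingMonomial]

protected theorem mul {e e' : σ →₀ ℕ} {P P' : MvPolynomial σ R} (hP : HasLeadingMonomial w e P)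
    (hP' : HasLeadingMonomial w e' P') : HasLeadingMonomial w (e + e') (P * P') := by
  have split : P * P' - monomial (e + e') 1 =
      (P - monomial e 1) * P' + (P' - monomial e' 1) * monomial e 1 := by
    have := monomial_mul (s := e) (s' := e') (a := (1 : R)) (b := 1)
    rw [one_mul] at this
    linear_combination this
  rw [HasLeadingMonomial, split, map_add]
  refine add_mem (mul_mem_weightLT hP hP'.mem_weightLT) ?_
  rw [add_comm]
  exact mul_mem_weightLT hP' (HasLeadingMonomial.monomial e).mem_weightLT

protected theorem pow {e : σ →₀ ℕ} {P : MvPolynomial σ R} (hP : HasLeadingMonomial w e P) :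
    ∀ k : ℕ, HasLeadingMonomial w (k • e) (P ^ k)
  | 0 => by simpa using HasLeadingMonomial.monomial (w := w) (R := R) 0
  | k + 1 => by simpa only [succ_nsmul, pow_succ] using (hP.pow k).mul hP

protected theorem prod {ι : Type*} (s : Finset ι) {e : ι → σ →₀ ℕ} {P : ι → MvPolynomial σ R}
    (hP : ∀ i, HasLeadingMonomial w (e i) (P i)) :
    HasLeadingMonomial w (∑ i ∈ s, e i) (∏ i ∈ s, P i) := by
  induction s using Finset.cons_induction with
  | empty => simpa using HasLeadingMonomial.monomial (w := w) (R := R) 0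
  | cons i s hi ih => simpa only [Finset.sum_cons, Finset.prod_cons] using (hP i).mul ih

variable {P : (σ →₀ ℕ) → MvPolynomial σ R}

theorem one_sub_constr_mem_weightLT (hP : ∀ e, HasLeadingMonomial w e (P e)) {k : ℕ}
    {p : MvPolynomial σ R} (hp : p ∈ weightLT R w (k + 1)) :
    (1 - (basisMonomials σ R).constr R P) p ∈ weightLT R w k := by
  revert p
  change weightLT R w (k + 1) ≤ (weightLT R w k).comap (1 - (basisMonomials σ R).constr R P)
  rw [weightLT, restrictSupport_eq_span, Submodule.span_le]
  rintro _ ⟨e, he, rfl⟩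
  rw [SetLike.mem_coe, Submodule.mem_comap, LinearMap.sub_apply, Module.End.one_apply,
    basisMonomials_constr_monomial, ← neg_sub]
  exact neg_mem (weightLT_mono (Nat.le_of_lt_succ he) (hP e))

theorem bijective_constr (hP : ∀ e, HasLeadingMonomial w e (P e)) :
    Function.Bijective ((basisMonomials σ R).constr R P) := by
  have nilpotent (k : ℕ) : ∀ p ∈ weightLT R w k,
      ((1 - (basisMonomials σ R).constr R P) ^ k) p = 0 := by
    induction k with
    | zero => simp [weightLT, restrictSupport_eq_span]
    | succ k ih => exact fun p hp => ih _ (one_sub_constr_mem_weightLT hP hp)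
  refine bijective_of_forall_exists_one_sub_pow_apply_eq_zero fun p =>
    ⟨p.support.sup (Finsupp.weight w) + 1, nilpotent _ p ?_⟩
  exact (mem_restrictSupport_iff _).mpr fun m hm => Nat.lt_succ_of_le (Finset.le_sup hm)

/-- A family with one polynomial for each leading monomial is a basis, because it is related to
the monomial basis by a unitriangular change of coordinates. -/
noncomputable def basis (hP : ∀ e, HasLeadingMonomial w e (P e)) :
    Module.Basis (σ →₀ ℕ) R (MvPolynomial σ R) :=
  (basisMonomials σ R).map (LinearEquiv.ofBijective _ (bijective_constr hP))

@[simp]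
theorem coe_basis (hP : ∀ e, HasLeadingMonomial w e (P e)) : ⇑(basis hP) = P := by
  ext1 e
  simp [basis, basisMonomials_constr_monomial]

end HasLeadingMonomial

end LeadingMonomial

section ResidueField

variable {k B : Type*} [Field k] [CommRing B] [Algebra k B] [FiniteDimensional k B]

variable (k) in
theorem finrank_quotient_sup_add_finrank_quotient_colon (I : Ideal B) (b : B) :
    Module.finrank k (B ⧸ I ⊔ Ideal.span {b}) + Module.finrank k (B ⧸ I.colon {b}) =
      Module.finrank k (B ⧸ I) := by
  let mulMk : B →ₗ[B] B ⧸ I := LinearMap.toSpanSingleton B (B ⧸ I) (Submodule.Quotient.mk b)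
  have ker_mulMk : LinearMap.ker mulMk = I.colon {b} := by
    ext x
    simp only [mulMk, LinearMap.mem_ker, LinearMap.toSpanSingleton_apply,
      ← Submodule.Quotient.mk_smul, Submodule.Quotient.mk_eq_zero, Submodule.mem_colon_singleton]
  have range_mulMk : LinearMap.range mulMk = Submodule.map I.mkQ (Ideal.span {b}) := by
    rw [LinearMap.range_toSpanSingleton, Ideal.span, Submodule.map_span, Set.image_singleton,
      Submodule.mkQ_apply]
  have finrank_colon : Module.finrank k (B ⧸ I.colon {b}) =
      Module.finrank k (Submodule.map I.mkQ (Ideal.span {b})) := by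
    rw [← ker_mulMk, ← range_mulMk]
    exact (mulMk.quotKerEquivRange.restrictScalars k).finrank_eq
  have finrank_sup : Module.finrank k (B ⧸ I ⊔ Ideal.span {b}) =
      Module.finrank k ((B ⧸ I) ⧸ Submodule.map I.mkQ (Ideal.span {b})) :=
    ((Submodule.quotientQuotientEquivQuotientSup I
      (Ideal.span {b})).restrictScalars k).symm.finrank_eq
  rw [finrank_colon, finrank_sup]
  exact Submodule.finrank_quotient_add_finrank
    ((Submodule.map I.mkQ (Ideal.span {b})).restrictScalars k)

theorem exists_isMaximal_odd_finrank_quotient (hB : Odd (Module.finrank k B)) :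
    ∃ M : Ideal B, M.IsMaximal ∧ Odd (Module.finrank k (B ⧸ M)) := by
  have : IsNoetherianRing B := IsNoetherianRing.of_finite k B
  have odd_bot : Odd (Module.finrank k (B ⧸ (⊥ : Ideal B))) := by
    rwa [((Submodule.quotEquivOfEqBot (⊥ : Ideal B) rfl).restrictScalars k).finrank_eq]
  obtain ⟨M, hM, hmax⟩ := set_has_maximal_iff_noetherian.mpr this
    {I : Ideal B | Odd (Module.finrank k (B ⧸ I))} ⟨⊥, odd_bot⟩
  refine ⟨M, Ideal.isMaximal_iff.mpr ⟨fun one_mem => ?_, fun J b hMJ hbM hbJ => ?_⟩, hM⟩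
  · have : Subsingleton (B ⧸ M) :=
      Ideal.Quotient.subsingleton_iff.mpr ((Ideal.eq_top_iff_one M).mpr one_mem)
    simp [Module.finrank_zero_of_subsingleton] at hM
  · have even_sup : ¬ Odd (Module.finrank k (B ⧸ M ⊔ Ideal.span {b})) := fun odd_sup =>
      hmax _ odd_sup (left_lt_sup.mpr (by simpa using hbM))
    have add_eq := finrank_quotient_sup_add_finrank_quotient_colon k M b
    have odd_colon : Odd (Module.finrank k (B ⧸ M.colon {b})) := by
      have odd_M : Odd (Module.finrank k (B ⧸ M)) := hM
      rw [← add_eq] at odd_M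
      grind
    have colon_eq : M.colon {b} = M :=
      (Ideal.le_colon.eq_or_lt.resolve_right (hmax _ odd_colon)).symm
    rw [colon_eq] at add_eq
    have : Subsingleton (B ⧸ M ⊔ Ideal.span {b}) :=
      (Module.finrank_zero_iff (R := k)).mp (by omega)
    have one_mem : (1 : B) ∈ M ⊔ Ideal.span {b} :=
      (Ideal.eq_top_iff_one _).mp (Ideal.Quotient.subsingleton_iff.mp this)
    exact sup_le hMJ (by simpa using hbJ) one_mem

end ResidueField

theorem exists_algHom_complex_real_on_subalgebra {A : Type*} [CommRing A] [Algebra ℝ A]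
    [FiniteDimensional ℝ A] (B : Subalgebra ℝ A) (hB : Odd (Module.finrank ℝ B)) :
    ∃ χ : A →ₐ[ℝ] ℂ, ∀ b ∈ B, (χ b).im = 0 := by
  obtain ⟨M, hM, odd_residue⟩ := exists_isMaximal_odd_finrank_quotient hB
  have : Algebra.IsIntegral B A := Algebra.IsIntegral.tower_top ℝ
  obtain ⟨N, hN, hNM⟩ := Ideal.exists_maximal_ideal_liesOver_of_isIntegral (S := A) M
  let : Field (A ⧸ N) := Ideal.Quotient.field N
  let residue : A ⧸ N →ₐ[ℝ] ℂ := IsAlgClosed.lift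
  let χ : A →ₐ[ℝ] ℂ := residue.comp (Ideal.Quotient.mkₐ ℝ N)
  have ker_χ : RingHom.ker (χ.comp B.val) = M := by
    ext b
    rw [hNM.over]
    exact (map_eq_zero_iff residue residue.injective).trans Ideal.Quotient.eq_zero_iff_mem
  have odd_range : Odd (Module.finrank ℝ (χ.comp B.val).range) := by
    rwa [← (Ideal.quotientKerEquivRange (χ.comp B.val)).toLinearEquiv.finrank_eq,
      (Ideal.quotientEquivAlgOfEq ℝ ker_χ).toLinearEquiv.finrank_eq]
  have range_eq_bot : (χ.comp B.val).range = ⊥ := by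
    refine Subalgebra.eq_bot_of_finrank_one ?_
    have := Submodule.finrank_le (Subalgebra.toSubmodule (χ.comp B.val).range)
    rw [Complex.finrank_real_complex, Subalgebra.finrank_toSubmodule] at this
    obtain ⟨j, hj⟩ := odd_range
    omega
  refine ⟨χ, fun b hb => ?_⟩
  obtain ⟨r, hr⟩ := Algebra.mem_bot.mp (range_eq_bot ▸ (χ.comp B.val).mem_range_self ⟨b, hb⟩)
  change algebraMap ℝ ℂ r = χ b at hr
  simp [← hr]

theorem im_eq_zero_of_forall_mul_im_eq_zero {ι : Type*} [Fintype ι] {z : ι → ℂ}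
    (hmul : ∀ i j, (z i * z j).im = 0) (hsum : ∑ i, z i ^ 2 = 1) (j : ι) : (z j).im = 0 := by
  have re_mul_im (i : ι) : (z i).re * (z i).im = 0 := by
    have := hmul i i
    rw [Complex.mul_im] at this
    linarith
  have one_le : 1 ≤ ∑ i, (z i).re ^ 2 := by
    have hre := congrArg Complex.re hsum
    simp only [Complex.re_sum, sq, Complex.mul_re, Complex.one_re, Finset.sum_sub_distrib] at hre
    have := Finset.sum_nonneg fun i (_ : i ∈ Finset.univ) => mul_self_nonneg (z i).im
    simp only [sq]
    linarith
  have sum_mul_im : (∑ i, (z i).re ^ 2) * (z j).im = 0 := by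
    rw [Finset.sum_mul]
    refine Finset.sum_eq_zero fun i _ => ?_
    have := hmul i j
    rw [Complex.mul_im] at this
    linear_combination (z i).re * this - (z j).re * re_mul_im i
  exact (mul_eq_zero.mp sum_mul_im).resolve_left (by linarith)

section AdicMonomial

open MvPolynomial

variable {σ R : Type*} [Fintype σ] [CommRing R] {w d : σ → ℕ} {q : σ → MvPolynomial σ R}

variable (d q) in
/-- The monomial with exponent `e`, in which each full power `X i ^ d i` is replaced by `q i`. -/
noncomputable def adicMonomial (e : σ →₀ ℕ) : MvPolynomial σ R :=
  ∏ i, X i ^ (e i % d i) * q i ^ (e i / d i)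

theorem hasLeadingMonomial_adicMonomial
    (hq : ∀ i, HasLeadingMonomial w (Finsupp.single i (d i)) (q i)) (e : σ →₀ ℕ) :
    HasLeadingMonomial w e (adicMonomial d q e) := by
  have divMod : ∑ i, ((e i % d i) • Finsupp.single i 1 + (e i / d i) • Finsupp.single i (d i)) =
      e := by
    simp only [Finsupp.smul_single, ← Finsupp.single_add, smul_eq_mul, mul_one, Nat.mod_add_div']
    exact Finsupp.univ_sum_single e
  have := HasLeadingMonomial.prod Finset.univ fun i =>
    ((HasLeadingMonomial.monomial (R := R) (w := w) (Finsupp.single i 1)).pow (e i % d i)).mul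
      ((hq i).pow (e i / d i))
  rwa [divMod] at this

theorem mul_adicMonomial (hd : ∀ i, 0 < d i) (i : σ) (e : σ →₀ ℕ) :
    q i * adicMonomial d q e = adicMonomial d q (e + Finsupp.single i (d i)) := by
  classical
  rw [adicMonomial, adicMonomial, ← Finset.mul_prod_erase _ _ (Finset.mem_univ i),
    ← Finset.mul_prod_erase _ _ (Finset.mem_univ i)]
  have factor_eq : X i ^ ((e + Finsupp.single i (d i)) i % d i) *
      q i ^ ((e + Finsupp.single i (d i)) i / d i) =
        q i * (X i ^ (e i % d i) * q i ^ (e i / d i)) := by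
    rw [Finsupp.add_apply, Finsupp.single_eq_same, Nat.add_mod_right,
      Nat.add_div_right _ (hd i), pow_succ]
    ring
  have other_eq : ∀ j ∈ Finset.univ.erase i, X j ^ ((e + Finsupp.single i (d i)) j % d j) *
      q j ^ ((e + Finsupp.single i (d i)) j / d j) = X j ^ (e j % d j) * q j ^ (e j / d j) := by
    intro j hj
    rw [Finsupp.add_apply, Finsupp.single_eq_of_ne (Finset.ne_of_mem_erase hj), add_zero]
  rw [factor_eq, Finset.prod_congr rfl other_eq, ← mul_assoc]

variable (q) in
theorem adicMonomial_mem_span_range (hd : ∀ i, 0 < d i) {e : σ →₀ ℕ} {i : σ} (hi : d i ≤ e i) :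
    adicMonomial d q e ∈ Ideal.span (Set.range q) := by
  have : adicMonomial d q e = q i * adicMonomial d q (e - Finsupp.single i (d i)) := by
    rw [mul_adicMonomial hd, tsub_add_cancel_of_le (Finsupp.single_le_iff.mpr hi)]
  rw [this]
  exact Ideal.mul_mem_right _ _ (Ideal.subset_span ⟨i, rfl⟩)

theorem restrictScalars_span_range_eq_span_adicMonomial (hd : ∀ i, 0 < d i)
    (hq : ∀ i, HasLeadingMonomial w (Finsupp.single i (d i)) (q i)) :
    (Ideal.span (Set.range q)).restrictScalars R =
      Submodule.span R (adicMonomial d q '' {e | ∀ i, e i < d i}ᶜ) := by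
  refine le_antisymm (fun p hp => ?_) (Submodule.span_le.mpr ?_)
  · obtain ⟨c, rfl⟩ := Ideal.mem_span_range_iff_exists_fun.mp hp
    refine sum_mem fun i _ => ?_
    have c_mem : c i ∈ Submodule.span R (Set.range (adicMonomial d q)) := by
      rw [← HasLeadingMonomial.coe_basis (hasLeadingMonomial_adicMonomial hq),
        Module.Basis.span_eq]
      trivial
    have : c i * q i ∈ (Submodule.span R (Set.range (adicMonomial d q))).map
        (LinearMap.mulRight R (q i)) := ⟨c i, c_mem, rfl⟩
    refine Submodule.map_span_le _ _ _ |>.mpr ?_ this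
    rintro _ ⟨e, rfl⟩
    rw [LinearMap.mulRight_apply, mul_comm, mul_adicMonomial hd]
    exact Submodule.subset_span ⟨_, fun h => by simpa using h i, rfl⟩
  · rintro _ ⟨e, he, rfl⟩
    obtain ⟨i, hi⟩ := not_forall.mp he
    exact adicMonomial_mem_span_range q hd (not_lt.mp hi)

end AdicMonomial

theorem finite_setOf_forall_lt {σ : Type*} [Finite σ] (d : σ → ℕ) :
    {e : σ →₀ ℕ | ∀ i, e i < d i}.Finite :=
  (Set.Finite.pi' fun i => Set.finite_Iio (d i)).preimage DFunLike.coe_injective.injOn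

section Parity

open MvPolynomial

variable {σ R : Type*} [CommRing R]

variable (σ R) in
/-- The involution `p(x) ↦ p(-x)` of the polynomial ring. -/
noncomputable def negVars : MvPolynomial σ R →ₐ[R] MvPolynomial σ R :=
  aeval fun i => -X i

@[simp]
theorem negVars_X (i : σ) : negVars σ R (X i) = -X i := by
  simp [negVars]

theorem eval_negVars (x : σ → R) (p : MvPolynomial σ R) :
    eval x (negVars σ R p) = eval (-x) p := by
  induction p using MvPolynomial.induction_on with
  | C a => simp [negVars]
  | add p q hp hq => simp [hp, hq]
  | mul_X p i hp => simp [hp]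

@[simp]
theorem negVars_negVars (p : MvPolynomial σ R) : negVars σ R (negVars σ R p) = p := by
  have : (negVars σ R).comp (negVars σ R) = AlgHom.id R _ := by
    ext i
    simp
  exact DFunLike.congr_fun this p

variable (σ R) in
/-- The polynomials with `p(-x) = p(x)`. -/
noncomputable def evenSubalgebra : Subalgebra R (MvPolynomial σ R) :=
  AlgHom.equalizer (negVars σ R) (AlgHom.id R _)

theorem X_mul_X_mem_evenSubalgebra (i j : σ) : X i * X j ∈ evenSubalgebra σ R := by
  simp [evenSubalgebra, AlgHom.mem_equalizer]

variable [Fintype σ] {d : σ → ℕ} {q : σ → MvPolynomial σ R}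

theorem negVars_adicMonomial (hq : ∀ i, negVars σ R (q i) = (-1) ^ d i * q i) (e : σ →₀ ℕ) :
    negVars σ R (adicMonomial d q e) = (-1 : R) ^ e.degree • adicMonomial d q e := by
  have factor_eq (i : σ) : negVars σ R (X i ^ (e i % d i) * q i ^ (e i / d i)) =
      (-1) ^ e i * (X i ^ (e i % d i) * q i ^ (e i / d i)) := by
    rw [map_mul, map_pow, map_pow, negVars_X, hq, neg_pow, mul_pow, ← pow_mul, mul_mul_mul_comm,
      ← pow_add, Nat.mod_add_div]
  rw [adicMonomial, map_prod, Finset.prod_congr rfl fun i _ => factor_eq i,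
    Finset.prod_mul_distrib, Finset.prod_pow_eq_pow_sum, ← Finsupp.degree_eq_sum, smul_eq_C_mul]
  simp

theorem toSubmodule_evenSubalgebra_eq_span_adicMonomial [IsDomain R] [NeZero (2 : R)] {w : σ → ℕ}
    (hlead : ∀ i, HasLeadingMonomial w (Finsupp.single i (d i)) (q i))
    (hq : ∀ i, negVars σ R (q i) = (-1) ^ d i * q i) :
    Subalgebra.toSubmodule (evenSubalgebra σ R) =
      Submodule.span R (adicMonomial d q '' {e | Even e.degree}) := by
  have neg_one_ne_one : (-1 : R) ≠ 1 := fun h => NeZero.ne (2 : R) (by linear_combination -h)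
  have := eqLocus_id_eq_span_of_diagonal
    (HasLeadingMonomial.basis (hasLeadingMonomial_adicMonomial hlead))
    (τ := (negVars σ R).toLinearMap) (c := fun e => (-1) ^ e.degree)
    (fun e => by simpa using negVars_adicMonomial hq e)
  simp only [HasLeadingMonomial.coe_basis, neg_one_pow_eq_one_iff_even neg_one_ne_one] at this
  exact this

theorem exists_forall_mem_eval_eq_zero_of_algHom_quotient {I : Ideal (MvPolynomial σ ℝ)}
    (χ : (MvPolynomial σ ℝ ⧸ I) →ₐ[ℝ] ℂ)
    (hχ : ∀ i j, (χ (Ideal.Quotient.mk I (X i * X j))).im = 0)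
    (hsphere : ∑ i, X i ^ 2 - 1 ∈ I) :
    ∃ a : σ → ℝ, ∀ p ∈ I, eval a p = 0 := by
  let z (i : σ) : ℂ := χ (Ideal.Quotient.mk I (X i))
  have aeval_z (p : MvPolynomial σ ℝ) (hp : p ∈ I) : aeval z p = 0 := by
    have : aeval z = χ.comp (Ideal.Quotient.mkₐ ℝ I) := by
      ext i
      simp [z]
    rw [this, AlgHom.comp_apply, Ideal.Quotient.mkₐ_eq_mk, Ideal.Quotient.eq_zero_iff_mem.mpr hp,
      map_zero]
  have im_z := im_eq_zero_of_forall_mul_im_eq_zero (z := z)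
    (fun i j => by simpa only [z, map_mul] using hχ i j)
    (by simpa [sub_eq_zero] using aeval_z _ hsphere)
  have z_eq : z = fun i => algebraMap ℝ ℂ (z i).re := funext fun i =>
    Complex.ext rfl (im_z i)
  refine ⟨fun i => (z i).re, fun p hp => ?_⟩
  have := aeval_z p hp
  rw [z_eq, ← Function.comp_def, aeval_algebraMap_apply] at this
  simpa using this

/-- The real zero is a complex character of the quotient algebra that is real on even elements;
such a character exists because the even part of the quotient has odd dimension. -/
theorem exists_eval_eq_zero_of_odd_card {d w : σ → ℕ} {q : σ → MvPolynomial σ ℝ}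
    (hd : ∀ i, 0 < d i) (hlead : ∀ i, HasLeadingMonomial w (Finsupp.single i (d i)) (q i))
    (hq : ∀ i, negVars σ ℝ (q i) = (-1) ^ d i * q i)
    (hsphere : ∑ i, X i ^ 2 - 1 ∈ Ideal.span (Set.range q))
    (hcard : Odd (Nat.card ↑({e : σ →₀ ℕ | ∀ i, e i < d i} ∩ {e | Even e.degree}))) :
    ∃ a : σ → ℝ, ∀ i, eval a (q i) = 0 := by
  let I := Ideal.span (Set.range q)
  let π := Ideal.Quotient.mkₐ ℝ I
  let b := HasLeadingMonomial.basis (hasLeadingMonomial_adicMonomial hlead)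
  have b_eq : ⇑b = adicMonomial d q := HasLeadingMonomial.coe_basis _
  have ker_π : LinearMap.ker π.toLinearMap =
      Submodule.span ℝ (b '' {e | ∀ i, e i < d i}ᶜ) := by
    rw [b_eq, ← restrictScalars_span_range_eq_span_adicMonomial hd hlead]
    ext p
    exact Ideal.Quotient.eq_zero_iff_mem
  have : FiniteDimensional ℝ (MvPolynomial σ ℝ ⧸ I) :=
    finite_of_ker_eq_span ker_π (finite_setOf_forall_lt d) (Ideal.Quotient.mkₐ_surjective ℝ I)
  have odd_finrank : Odd (Module.finrank ℝ ((evenSubalgebra σ ℝ).map π)) := by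
    rw [← Subalgebra.finrank_toSubmodule, Subalgebra.map_toSubmodule,
      toSubmodule_evenSubalgebra_eq_span_adicMonomial hlead hq, ← b_eq,
      finrank_map_span_image_of_ker_eq_span ker_π (finite_setOf_forall_lt d)]
    exact hcard
  obtain ⟨χ, hχ⟩ := exists_algHom_complex_real_on_subalgebra _ odd_finrank
  obtain ⟨a, ha⟩ := exists_forall_mem_eval_eq_zero_of_algHom_quotient χ
    (fun i j => hχ _ (Subalgebra.mem_map.mpr ⟨_, X_mul_X_mem_evenSubalgebra i j, rfl⟩)) hsphere
  exact ⟨a, fun i => ha _ (Ideal.subset_span ⟨i, rfl⟩)⟩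

end Parity

theorem card_forall_lt_inter_even_degree {ι : Type*} [Fintype ι] {d : Option ι → ℕ}
    (hd : d none = 2) :
    Nat.card ↑({e : Option ι →₀ ℕ | ∀ i, e i < d i} ∩ {e | Even e.degree}) =
      ∏ i, d (some i) := by
  let restrict (e : ↑({e : Option ι →₀ ℕ | ∀ i, e i < d i} ∩ {e | Even e.degree})) (i : ι) :
    Fin (d (some i)) := ⟨e.1 (some i), e.2.1 (some i)⟩
  have degree_eq (e : Option ι →₀ ℕ) : e.degree = e none + ∑ i, e (some i) := by
    rw [Finsupp.degree_eq_sum, Fintype.sum_option]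
  have bijective_restrict : Function.Bijective restrict := by
    refine ⟨fun ⟨e, he, even_e⟩ ⟨e', he', even_e'⟩ h => Subtype.ext (Finsupp.ext fun i => ?_),
      fun c => ?_⟩
    · have some_eq (i : ι) : e (some i) = e' (some i) := congrArg Fin.val (congrFun h i)
      cases i with
      | some i => exact some_eq i
      | none =>
        have lt : e none < d none := he none
        have lt' : e' none < d none := he' none
        simp only [Set.mem_ofPred_eq, degree_eq, some_eq, Nat.even_iff] at even_e even_e'
        change e none = e' none
        omega
    · let e : Option ι →₀ ℕ := Finsupp.equivFunOnFinite.symm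
        fun i => i.elim ((∑ i, (c i : ℕ)) % 2) fun i => c i
      refine ⟨⟨e, fun i => ?_, ?_⟩, rfl⟩
      · cases i with
        | none => exact hd ▸ Nat.mod_lt _ two_pos
        | some i => exact (c i).2
      · rw [Set.mem_ofPred_eq, degree_eq, Nat.even_iff]
        simp only [e, Finsupp.equivFunOnFinite_symm_apply_apply, Option.elim]
        omega
  rw [Nat.card_congr (Equiv.ofBijective restrict bijective_restrict), Nat.card_pi]
  simp only [Nat.card_eq_fintype_card, Fintype.card_fin]

section OddSystem

open MvPolynomial

variable {ι R : Type*} [CommRing R]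

/-- The exponents of the leading monomials of `oddSystem p D`. -/
def oddSystemDegree (D : ℕ) (i : Option ι) : ℕ := i.elim 2 fun _ => D

/-- The weights for which `X none ^ 2` dominates in the equation of the sphere. -/
def oddSystemWeight (i : Option ι) : ℕ := i.elim 2 fun _ => 1

/-- The equation of the sphere, together with the equations `p i = 0` perturbed by `X i ^ D` so
that they have prescribed leading monomials. -/
noncomputable def oddSystem [Fintype ι] (p : ι → MvPolynomial (Option ι) R) (D : ℕ)
    (i : Option ι) : MvPolynomial (Option ι) R :=
  i.elim (∑ j, X j ^ 2 - 1) fun i => X (some i) ^ D + p i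

variable [Fintype ι] {p : ι → MvPolynomial (Option ι) R} {D : ℕ}

theorem hasLeadingMonomial_oddSystem (hD : ∀ i, (p i).totalDegree * 2 < D) (i : Option ι) :
    HasLeadingMonomial oddSystemWeight (Finsupp.single i (oddSystemDegree D i))
      (oddSystem p D i) := by
  rw [HasLeadingMonomial, Finsupp.weight_single]
  cases i with
  | none =>
    have : oddSystem p D none -
        monomial (Finsupp.single none (oddSystemDegree D (none : Option ι))) 1 =
        ∑ i : ι, monomial (Finsupp.single (some i) 2) 1 - monomial 0 1 := by
      simp only [oddSystem, oddSystemDegree, Option.elim, Fintype.sum_option,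
        X_pow_eq_monomial, monomial_zero', map_one]
      ring
    rw [this]
    refine sub_mem (sum_mem fun i _ => monomial_mem_weightLT ?_ 1) (monomial_mem_weightLT ?_ 1) <;>
      simp [oddSystemWeight, oddSystemDegree, Finsupp.weight_single]
  | some i =>
    have : oddSystem p D (some i) -
        monomial (Finsupp.single (some i) (oddSystemDegree D (some i))) 1 = p i := by
      simp [oddSystem, oddSystemDegree, X_pow_eq_monomial]
    rw [this]
    have weight_le (j : Option ι) : oddSystemWeight j ≤ 2 := by
      cases j <;> simp [oddSystemWeight]
    simpa [oddSystemWeight, oddSystemDegree] using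
      mem_weightLT_of_totalDegree_mul_lt weight_le (hD i)

theorem negVars_oddSystem (hD : Odd D) (hp : ∀ i, negVars _ R (p i) = -p i) (i : Option ι) :
    negVars _ R (oddSystem p D i) = (-1) ^ oddSystemDegree D i * oddSystem p D i := by
  cases i with
  | none => simp [oddSystem, oddSystemDegree]
  | some i => simp [oddSystem, oddSystemDegree, hp, hD.neg_pow, add_comm]

theorem exists_sum_sq_eq_one_and_pow_add_eval_eq_zero {p : ι → MvPolynomial (Option ι) ℝ}
    (hp : ∀ i, negVars _ ℝ (p i) = -p i) (hD : Odd D) (hpD : ∀ i, (p i).totalDegree * 2 < D) :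
    ∃ a : Option ι → ℝ, ∑ i, a i ^ 2 = 1 ∧ ∀ i, a (some i) ^ D + eval a (p i) = 0 := by
  have degree_pos (i : Option ι) : 0 < oddSystemDegree D i := by
    cases i
    · exact two_pos
    · exact hD.pos
  have odd_card : Odd (Nat.card ↑({e : Option ι →₀ ℕ | ∀ i, e i < oddSystemDegree D i} ∩
      {e | Even e.degree})) := by
    rw [card_forall_lt_inter_even_degree rfl]
    simpa [oddSystemDegree] using hD.pow
  obtain ⟨a, ha⟩ := exists_eval_eq_zero_of_odd_card degree_pos (hasLeadingMonomial_oddSystem hpD)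
    (negVars_oddSystem hD hp) (Ideal.subset_span ⟨none, rfl⟩) odd_card
  refine ⟨a, ?_, fun i => ?_⟩
  · simpa [oddSystem, sub_eq_zero] using ha none
  · simpa [oddSystem] using ha (some i)

end OddSystem

section BorsukUlam

open MvPolynomial

theorem exists_mvPolynomial_near_on_isCompact {σ : Type*} {K : Set (σ → ℝ)} (hK : IsCompact K)
    {f : (σ → ℝ) → ℝ} (hf : ContinuousOn f K) {ε : ℝ} (hε : 0 < ε) :
    ∃ p : MvPolynomial σ ℝ, ∀ x ∈ K, |eval x p - f x| < ε := by
  have : CompactSpace K := isCompact_iff_compactSpace.mp hK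
  let toContinuousMap : MvPolynomial σ ℝ →ₐ[ℝ] C(K, ℝ) :=
    aeval fun i => ⟨fun x => x.1 i, (continuous_apply i).comp continuous_subtype_val⟩
  have toContinuousMap_apply (p : MvPolynomial σ ℝ) (x : K) :
      toContinuousMap p x = eval x.1 p := by
    induction p using MvPolynomial.induction_on with
    | C r => simp [toContinuousMap]
    | add p q hp hq => simp [hp, hq]
    | mul_X p i hp => rw [map_mul, map_mul, ContinuousMap.mul_apply, hp]; simp [toContinuousMap]
  have separatesPoints : toContinuousMap.range.SeparatesPoints := by
    intro x y hxy
    obtain ⟨i, hi⟩ := Function.ne_iff.mp (Subtype.coe_ne_coe.mpr hxy)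
    refine ⟨_, ⟨toContinuousMap (X i), ⟨X i, rfl⟩, rfl⟩, ?_⟩
    simpa only [toContinuousMap_apply, eval_X] using hi
  obtain ⟨⟨_, p, rfl⟩, hp⟩ := ContinuousMap.exists_mem_subalgebra_near_continuous_of_separatesPoints
    toContinuousMap.range separatesPoints (K.domRestrict f) hf.domRestrict ε hε
  exact ⟨p, fun x hx => toContinuousMap_apply p ⟨x, hx⟩ ▸ hp ⟨x, hx⟩⟩

theorem exists_odd_mvPolynomial_near_on_isCompact {σ : Type*} {K : Set (σ → ℝ)}
    (hK : IsCompact K) (hKneg : ∀ x ∈ K, -x ∈ K) {f : (σ → ℝ) → ℝ} (hf : ContinuousOn f K)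
    (hodd : ∀ x ∈ K, f (-x) = -f x) {ε : ℝ} (hε : 0 < ε) :
    ∃ p : MvPolynomial σ ℝ, negVars σ ℝ p = -p ∧ ∀ x ∈ K, |eval x p - f x| < ε := by
  obtain ⟨p, hp⟩ := exists_mvPolynomial_near_on_isCompact hK hf hε
  refine ⟨(2⁻¹ : ℝ) • (p - negVars σ ℝ p), ?_, fun x hx => ?_⟩
  · rw [map_smul, map_sub, negVars_negVars, ← smul_neg, neg_sub]
  · have near_x := abs_lt.mp (hp x hx)
    have near_neg := abs_lt.mp (hp (-x) (hKneg x hx))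
    rw [hodd x hx] at near_neg
    rw [smul_eval, map_sub, eval_negVars, abs_lt]
    constructor <;> linarith

theorem abs_le_one_of_sum_sq_eq_one {σ : Type*} [Fintype σ] {a : σ → ℝ} (ha : ∑ i, a i ^ 2 = 1)
    (i : σ) : |a i| ≤ 1 :=
  (sq_le_one_iff_abs_le_one _).mp
    (ha ▸ Finset.single_le_sum (fun j _ => sq_nonneg (a j)) (Finset.mem_univ i))

theorem isCompact_setOf_sum_sq_eq_one (σ : Type*) [Fintype σ] :
    IsCompact {a : σ → ℝ | ∑ i, a i ^ 2 = 1} := by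
  refine (isCompact_Icc (a := (-1 : σ → ℝ)) (b := 1)).of_isClosed_subset
    (isClosed_eq (by fun_prop) continuous_const) fun a ha => ?_
  have h (i : σ) := abs_le.mp (abs_le_one_of_sum_sq_eq_one ha i)
  exact ⟨fun i => (h i).1, fun i => (h i).2⟩

variable {ι : Type*} [Fintype ι]

theorem exists_sum_sq_eq_one_and_abs_eval_le {p : ι → MvPolynomial (Option ι) ℝ}
    (hp : ∀ i, negVars _ ℝ (p i) = -p i) {ε : ℝ} (hε : 0 < ε) :
    ∃ a : Option ι → ℝ, ∑ i, a i ^ 2 = 1 ∧ ∀ i, |eval a (p i)| ≤ ε := by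
  let P (i : ι) := ε⁻¹ • p i
  let D := (Finset.univ.sup fun i => (P i).totalDegree) * 2 + 1
  have degree_lt (i : ι) : (P i).totalDegree * 2 < D := by
    have := Finset.le_sup (f := fun i => (P i).totalDegree) (Finset.mem_univ i)
    omega
  obtain ⟨a, ha, hzero⟩ := exists_sum_sq_eq_one_and_pow_add_eval_eq_zero
    (p := P) (D := D) (fun i => by simp [P, hp]) (by simp [D]) degree_lt
  refine ⟨a, ha, fun i => ?_⟩
  have eval_eq : eval a (p i) = -(ε * a (some i) ^ D) := by
    have := hzero i
    rw [smul_eval] at this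
    field_simp at this
    linarith
  rw [eval_eq, abs_neg, abs_mul, abs_of_pos hε, abs_pow]
  exact mul_le_of_le_one_right hε.le
    (pow_le_one₀ (abs_nonneg _) (abs_le_one_of_sum_sq_eq_one ha _))

theorem exists_eq_zero_of_forall_exists_norm_le {α F : Type*} [TopologicalSpace α]
    [NormedAddCommGroup F] {K : Set α} (hK : IsCompact K) {f : α → F} (hf : ContinuousOn f K)
    (hsmall : ∀ ε > 0, ∃ x ∈ K, ‖f x‖ ≤ ε) : ∃ x ∈ K, f x = 0 := by
  obtain ⟨y, hy, -⟩ := hsmall 1 one_pos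
  obtain ⟨x, hx, hmin⟩ := hK.exists_isMinOn ⟨y, hy⟩ hf.norm
  refine ⟨x, hx, norm_le_zero_iff.mp (le_of_forall_pos_le_add fun ε hε => ?_)⟩
  obtain ⟨y, hy, hle⟩ := hsmall ε hε
  rw [zero_add]
  exact (hmin hy).trans hle

theorem exists_sum_sq_eq_one_and_eq_zero_of_odd {f : (Option ι → ℝ) → ι → ℝ}
    (hf : ContinuousOn f {a | ∑ i, a i ^ 2 = 1})
    (hodd : ∀ a, ∑ i, a i ^ 2 = 1 → f (-a) = -f a) :
    ∃ a, ∑ i, a i ^ 2 = 1 ∧ f a = 0 := by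
  have hK := isCompact_setOf_sum_sq_eq_one (Option ι)
  refine exists_eq_zero_of_forall_exists_norm_le hK hf fun ε hε => ?_
  choose p p_odd p_near using fun i : ι => exists_odd_mvPolynomial_near_on_isCompact hK
    (fun a ha => by simpa using ha) (continuousOn_pi.mp hf i)
    (fun a ha => congrFun (hodd a ha) i) (half_pos hε)
  obtain ⟨a, ha, small⟩ := exists_sum_sq_eq_one_and_abs_eval_le p_odd (half_pos hε)
  refine ⟨a, ha, (pi_norm_le_iff_of_nonneg hε.le).mpr fun i => ?_⟩
  calc
    |f a i| ≤ |eval a (p i) - f a i| + |eval a (p i)| := by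
      rw [abs_sub_comm]
      simpa using abs_add_le (f a i - eval a (p i)) (eval a (p i))
    _ ≤ ε / 2 + ε / 2 := add_le_add (p_near i a ha).le (small i)
    _ = ε := add_halves ε

theorem borsuk_ulam {E F : Type*} [NormedAddCommGroup E] [InnerProductSpace ℝ E]
    [NormedAddCommGroup F] [NormedSpace ℝ F] [FiniteDimensional ℝ F]
    (hEF : Module.finrank ℝ E = Module.finrank ℝ F + 1) {f : E → F}
    (hf : ContinuousOn f (Metric.sphere 0 1)) (hodd : ∀ x ∈ Metric.sphere 0 1, f (-x) = -f x) :
    ∃ x ∈ Metric.sphere (0 : E) 1, f x = 0 := by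
  have : FiniteDimensional ℝ E := .of_finrank_pos (hEF ▸ Nat.succ_pos _)
  let b := (stdOrthonormalBasis ℝ E).reindex ((finCongr hEF).trans (finSuccEquiv _))
  let coords : F ≃L[ℝ] (Fin (Module.finrank ℝ F) → ℝ) := (Module.finBasis ℝ F).equivFunL
  let point (a : Option (Fin (Module.finrank ℝ F)) → ℝ) : E := b.repr.symm (WithLp.toLp 2 a)
  have point_mem {a} (ha : ∑ i, a i ^ 2 = 1) : point a ∈ Metric.sphere 0 1 := by
    simp [point, EuclideanSpace.norm_eq, ha]
  have continuous_point : Continuous point :=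
    b.repr.symm.continuous.comp (PiLp.continuous_toLp 2 _)
  obtain ⟨a, ha, hzero⟩ := exists_sum_sq_eq_one_and_eq_zero_of_odd
    (f := fun a => coords (f (point a)))
    (coords.continuous.comp_continuousOn
      (hf.comp continuous_point.continuousOn fun _ => point_mem))
    (fun a ha => by
      rw [← map_neg, ← hodd _ (point_mem ha)]
      simp [point])
  exact ⟨point a, point_mem ha, coords.map_eq_zero_iff.mp hzero⟩

end BorsukUlam

section SphericalCurve

open Set InnerProductGeometry
open scoped RealInnerProductSpace Topology

variable {E : Type*} [NormedAddCommGroup E] [InnerProductSpace ℝ E]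

/-- `h` is a `C¹` curve in the unit sphere of `E`, parametrized by `[a, b]`, with derivative `h'`
(one-sided at the endpoints). -/
structure IsSphericalCurve (h h' : ℝ → E) (a b : ℝ) : Prop where
  hasDerivWithinAt : ∀ x ∈ Icc a b, HasDerivWithinAt h (h' x) (Icc a b) x
  continuousOn_deriv : ContinuousOn h' (Icc a b)
  norm_eq_one : ∀ x ∈ Icc a b, ‖h x‖ = 1

theorem abs_inner_le_norm_mul_sqrt_one_sub_sq {u u' v : E} (hu : ‖u‖ = 1) (hv : ‖v‖ = 1)
    (horth : ⟪u, u'⟫ = 0) : |⟪u', v⟫| ≤ ‖u'‖ * √(1 - ⟪u, v⟫ ^ 2) := by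
  have inner_eq : ⟪u', v⟫ = ⟪u', v - ⟪u, v⟫ • u⟫ := by
    rw [inner_sub_right, inner_smul_right, real_inner_comm u u', horth, mul_zero, sub_zero]
  have norm_sq : ‖v - ⟪u, v⟫ • u‖ ^ 2 = 1 - ⟪u, v⟫ ^ 2 := by
    rw [norm_sub_sq_real, inner_smul_right, real_inner_comm v u, norm_smul, hu, hv,
      Real.norm_eq_abs, mul_one, sq_abs]
    ring
  rw [← norm_sq, Real.sqrt_sq (norm_nonneg _), inner_eq]
  exact abs_real_inner_le_norm _ _

theorem mul_sqrt_one_sub_sq_le {r : ℝ} (hr₀ : 0 ≤ r) (hr₁ : r ≤ 1) (c : ℝ) :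
    r * √(1 - c ^ 2) ≤ √(1 - (r * c) ^ 2) := by
  nth_rw 1 [← Real.sqrt_sq hr₀]
  rw [← Real.sqrt_mul (sq_nonneg r)]
  exact Real.sqrt_le_sqrt (by nlinarith)

namespace IsSphericalCurve

variable {h h' : ℝ → E} {a b : ℝ}

theorem mono (hh : IsSphericalCurve h h' a b) {c d : ℝ} (hac : a ≤ c) (hdb : d ≤ b) :
    IsSphericalCurve h h' c d where
  hasDerivWithinAt x hx := (hh.hasDerivWithinAt x (Icc_subset_Icc hac hdb hx)).mono
    (Icc_subset_Icc hac hdb)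
  continuousOn_deriv := hh.continuousOn_deriv.mono (Icc_subset_Icc hac hdb)
  norm_eq_one x hx := hh.norm_eq_one x (Icc_subset_Icc hac hdb hx)

theorem continuousOn (hh : IsSphericalCurve h h' a b) : ContinuousOn h (Icc a b) :=
  fun x hx => (hh.hasDerivWithinAt x hx).continuousWithinAt

theorem intervalIntegrable_norm_deriv (hh : IsSphericalCurve h h' a b) {c d : ℝ}
    (hc : c ∈ Icc a b) (hd : d ∈ Icc a b) :
    IntervalIntegrable (fun x => ‖h' x‖) volume c d :=
  (hh.continuousOn_deriv.norm.mono (uIcc_subset_Icc hc hd)).intervalIntegrable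

theorem inner_deriv_eq_zero (hh : IsSphericalCurve h h' a b) {x : ℝ} (hx : x ∈ Ioo a b) :
    ⟪h x, h' x⟫ = 0 := by
  have hasDerivAt := (hh.hasDerivWithinAt x (Ioo_subset_Icc_self hx)).hasDerivAt
    (Icc_mem_nhds hx.1 hx.2)
  have norm_sq_eq : (fun y => ⟪h y, h y⟫) =ᶠ[𝓝 x] fun _ => 1 := by
    filter_upwards [Icc_mem_nhds hx.1 hx.2] with y hy
    rw [real_inner_self_eq_norm_sq, hh.norm_eq_one y hy, one_pow]
  have := (hasDerivAt.inner ℝ hasDerivAt).unique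
    ((hasDerivAt_const x 1).congr_of_eventuallyEq norm_sq_eq)
  rw [real_inner_comm] at this
  rw [real_inner_comm]
  linarith

theorem exists_hasDerivAt_arccos_mul_inner_le (hh : IsSphericalCurve h h' a b) {x : ℝ}
    (hx : x ∈ Ioo a b) {v : E} (hv : ‖v‖ = 1) {r : ℝ} (hr : r ∈ Ioo (0 : ℝ) 1) :
    ∃ g' ≤ ‖h' x‖, HasDerivAt (fun y => Real.arccos (r * ⟪h y, v⟫)) g' x := by
  have hasDerivAt := (hh.hasDerivWithinAt x (Ioo_subset_Icc_self hx)).hasDerivAt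
    (Icc_mem_nhds hx.1 hx.2)
  have hu := hh.norm_eq_one x (Ioo_subset_Icc_self hx)
  have inner_le : |⟪h x, v⟫| ≤ 1 := by simpa [hu, hv] using abs_real_inner_le_norm (h x) v
  have inner_sq_le : ⟪h x, v⟫ ^ 2 ≤ 1 := (sq_le_one_iff_abs_le_one _).mpr inner_le
  have sq_lt : (r * ⟪h x, v⟫) ^ 2 < 1 := by
    rw [mul_pow]
    nlinarith [hr.1, hr.2]
  have sqrt_pos : 0 < √(1 - (r * ⟪h x, v⟫) ^ 2) := Real.sqrt_pos.mpr (by linarith)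
  have abs_lt : |r * ⟪h x, v⟫| < 1 := (sq_lt_one_iff_abs_lt_one _).mp sq_lt
  have inner_deriv : HasDerivAt (fun y => r * ⟪h y, v⟫) (r * ⟪h' x, v⟫) x := by
    simpa using (hasDerivAt.inner ℝ (hasDerivAt_const x v)).const_mul r
  refine ⟨_, ?_, HasDerivAt.comp (h₂ := Real.arccos) x
    (Real.hasDerivAt_arccos (neg_lt_of_abs_lt abs_lt).ne' (lt_of_abs_lt abs_lt).ne) inner_deriv⟩
  have bound := abs_inner_le_norm_mul_sqrt_one_sub_sq hu hv (hh.inner_deriv_eq_zero hx)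
  rw [neg_mul, one_div, inv_mul_eq_div, ← neg_div, div_le_iff₀ sqrt_pos]
  calc
    -(r * ⟪h' x, v⟫) ≤ r * |⟪h' x, v⟫| := by
      rw [← mul_neg]
      exact mul_le_mul_of_nonneg_left (neg_le_abs _) hr.1.le
    _ ≤ r * (‖h' x‖ * √(1 - ⟪h x, v⟫ ^ 2)) := mul_le_mul_of_nonneg_left bound hr.1.le
    _ = ‖h' x‖ * (r * √(1 - ⟪h x, v⟫ ^ 2)) := by ring
    _ ≤ ‖h' x‖ * √(1 - (r * ⟪h x, v⟫) ^ 2) :=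
      mul_le_mul_of_nonneg_left (mul_sqrt_one_sub_sq_le hr.1.le hr.2.le _) (norm_nonneg _)

theorem angle_le_integral_norm_deriv (hh : IsSphericalCurve h h' a b) (hab : a ≤ b) :
    angle (h a) (h b) ≤ ∫ x in a..b, ‖h' x‖ := by
  have ha := hh.norm_eq_one a (left_mem_Icc.mpr hab)
  have hb := hh.norm_eq_one b (right_mem_Icc.mpr hab)
  -- The factor `r < 1` keeps the argument of `arccos` away from `±1`, where it is not
  -- differentiable.
  have scaled (r : ℝ) (hr : r ∈ Ioo (0 : ℝ) 1) :
      Real.arccos (r * ⟪h b, h a⟫) - Real.arccos (r * ⟪h a, h a⟫) ≤ ∫ x in a..b, ‖h' x‖ := by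
    choose! g' g'_le hg' using fun x (hx : x ∈ Ioo a b) =>
      hh.exists_hasDerivAt_arccos_mul_inner_le hx ha hr
    refine intervalIntegral.sub_le_integral_of_hasDeriv_right_of_le hab ?_
      (fun x hx => (hg' x hx).hasDerivWithinAt) hh.continuousOn_deriv.norm.integrableOn_Icc g'_le
    exact Real.continuous_arccos.comp_continuousOn
      (continuousOn_const.mul (hh.continuousOn.inner continuousOn_const))
  have continuous_scaled : Continuous fun r : ℝ =>
      Real.arccos (r * ⟪h b, h a⟫) - Real.arccos (r * ⟪h a, h a⟫) := by
    fun_prop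
  have limit := le_of_tendsto (continuous_scaled.continuousWithinAt (s := Iio 1) (x := 1))
    (Filter.mem_of_superset (Ioo_mem_nhdsLT zero_lt_one) scaled)
  rw [angle_comm, angle, ha, hb]
  simpa [real_inner_self_eq_norm_sq, ha] using limit

theorem inner_nonneg_of_abs_integral_le (hh : IsSphericalCurve h h' a b) {x y : ℝ}
    (hx : x ∈ Icc a b) (hy : y ∈ Icc a b) (hxy : |∫ s in x..y, ‖h' s‖| ≤ Real.pi / 2) :
    0 ≤ ⟪h x, h y⟫ := by
  rw [← cos_angle_mul_norm_mul_norm, hh.norm_eq_one x hx, hh.norm_eq_one y hy, mul_one, mul_one]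
  have angle_le : angle (h x) (h y) ≤ |∫ s in x..y, ‖h' s‖| := by
    rcases le_total x y with hle | hle
    · exact ((hh.mono hx.1 hy.2).angle_le_integral_norm_deriv hle).trans (le_abs_self _)
    · rw [angle_comm, intervalIntegral.integral_symm, abs_neg]
      exact ((hh.mono hy.1 hx.2).angle_le_integral_norm_deriv hle).trans (le_abs_self _)
  exact Real.cos_nonneg_of_neg_pi_div_two_le_of_le
    (by linarith [angle_nonneg (h x) (h y), Real.pi_pos]) (angle_le.trans hxy)

theorem exists_abs_integral_norm_deriv_le_half (hh : IsSphericalCurve h h' a b) (hab : a ≤ b) :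
    ∃ m ∈ Icc a b, ∀ x ∈ Icc a b, |∫ s in m..x, ‖h' s‖| ≤ (∫ s in a..b, ‖h' s‖) / 2 := by
  have ha := left_mem_Icc.mpr hab
  have hb := right_mem_Icc.mpr hab
  have length_nonneg {c d : ℝ} (hcd : c ≤ d) : 0 ≤ ∫ s in c..d, ‖h' s‖ :=
    intervalIntegral.integral_nonneg hcd fun _ _ => norm_nonneg _
  have continuousOn_length : ContinuousOn (fun x => ∫ s in a..x, ‖h' s‖) (Icc a b) := by
    rw [← uIcc_of_le hab]
    exact intervalIntegral.continuousOn_primitive_interval'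
      (hh.intervalIntegrable_norm_deriv ha hb) left_mem_uIcc
  obtain ⟨m, hm, hmid⟩ := intermediate_value_Icc hab continuousOn_length
    (show (∫ s in a..b, ‖h' s‖) / 2 ∈ _ by
      rw [intervalIntegral.integral_same]
      constructor <;> linarith [length_nonneg hab])
  refine ⟨m, hm, fun x hx => ?_⟩
  have am_add_mx := intervalIntegral.integral_add_adjacent_intervals
    (hh.intervalIntegrable_norm_deriv ha hm) (hh.intervalIntegrable_norm_deriv hm hx)
  have ax_add_xb := intervalIntegral.integral_add_adjacent_intervals
    (hh.intervalIntegrable_norm_deriv ha hx) (hh.intervalIntegrable_norm_deriv hx hb)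
  have := length_nonneg hx.1
  have := length_nonneg hx.2
  simp only at hmid
  rw [abs_le]
  constructor <;> linarith

theorem pi_lt_integral_norm_deriv_of_integral_eq_zero [CompleteSpace E]
    (hh : IsSphericalCurve h h' a b) (hab : a < b) (hzero : ∫ x in a..b, h x = 0) :
    Real.pi < ∫ x in a..b, ‖h' x‖ := by
  by_contra! length_le
  obtain ⟨m, hm, hmid⟩ := hh.exists_abs_integral_norm_deriv_le_half hab.le
  have inner_nonneg (x : ℝ) (hx : x ∈ Icc a b) : 0 ≤ ⟪h m, h x⟫ :=
    hh.inner_nonneg_of_abs_integral_le hm hx ((hmid x hx).trans (by linarith))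
  have inner_self : ⟪h m, h m⟫ = 1 := by
    rw [real_inner_self_eq_norm_sq, hh.norm_eq_one m hm, one_pow]
  have integral_inner : ∫ x in a..b, ⟪h m, h x⟫ = 0 := by
    have := (innerSL ℝ (h m)).intervalIntegral_comp_comm
      (hh.continuousOn.intervalIntegrable_of_Icc (μ := volume) hab.le)
    simpa [hzero] using this
  refine (intervalIntegral.integral_pos hab (continuousOn_const.inner hh.continuousOn)
    (fun x hx => inner_nonneg x (Ioc_subset_Icc_self hx)) ⟨m, hm, ?_⟩).ne' integral_inner
  rw [inner_self]
  exact one_pos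

theorem natCast_mul_pi_lt_integral_norm_deriv [CompleteSpace E] {t : ℕ → ℝ} (ht : StrictMono t)
    {n : ℕ} (hn : n ≠ 0) (hh : IsSphericalCurve h h' (t 0) (t n))
    (hzero : ∀ j < n, ∫ x in t j..t (j + 1), h x = 0) :
    n * Real.pi < ∫ x in t 0..t n, ‖h' x‖ := by
  have mem_Icc {j : ℕ} (hj : j ≤ n) : t j ∈ Icc (t 0) (t n) :=
    ⟨ht.monotone (Nat.zero_le j), ht.monotone hj⟩
  rw [← intervalIntegral.sum_integral_adjacent_intervals fun j hj =>
    hh.intervalIntegrable_norm_deriv (mem_Icc hj.le) (mem_Icc hj)]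
  calc
    n * Real.pi = ∑ _j ∈ Finset.range n, Real.pi := by simp
    _ < ∑ j ∈ Finset.range n, ∫ x in t j..t (j + 1), ‖h' x‖ :=
      Finset.sum_lt_sum_of_nonempty (Finset.nonempty_range_iff.mpr hn) fun j hj =>
        have hj := Finset.mem_range.mp hj
        pi_lt_integral_norm_deriv_of_integral_eq_zero
          (hh.mono (mem_Icc hj.le).1 (mem_Icc hj).2) (ht (Nat.lt_succ_self j)) (hzero j hj)

end IsSphericalCurve

end SphericalCurve

namespace MemYn

variable {n : ℕ} {h : ℝ → ℂ}

theorem isSphericalCurve (hh : MemYn n h) :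
    IsSphericalCurve h (derivWithin h (Set.Icc 0 1)) 0 1 where
  hasDerivWithinAt x hx := ((hh.1.differentiableOn (by simp)) x hx).hasDerivWithinAt
  continuousOn_deriv :=
    hh.1.continuousOn_derivWithin (uniqueDiffOn_Icc zero_lt_one) (by exact_mod_cast le_top)
  norm_eq_one := hh.2.1

theorem integral_norm_derivWithin_le (hh : MemYn n h) :
    ∫ x in (0 : ℝ)..1, ‖derivWithin h (Set.Icc 0 1) x‖ ≤ Real.pi * n := by
  have integral_norm : ∫ x in (0 : ℝ)..1, ‖h x‖ = 1 := by
    rw [intervalIntegral.integral_congr (g := fun _ => 1) fun x hx =>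
      hh.2.1 x (by rwa [Set.uIcc_of_le zero_le_one] at hx)]
    simp
  have := hh.2.2
  rw [integral_norm] at this
  linarith

theorem exists_integral_ne_zero (hn : n ≠ 0) (hh : MemYn n h) :
    ∃ j < n, ∫ x in (j / n : ℝ)..((j + 1 : ℕ) / n : ℝ), h x ≠ 0 := by
  by_contra! hzero
  have hn0 : (0 : ℝ) < n := by positivity
  have strictMono_div : StrictMono fun j : ℕ => (j / n : ℝ) := fun i j hij =>
    div_lt_div_of_pos_right (by exact_mod_cast hij) hn0
  have length_gt := IsSphericalCurve.natCast_mul_pi_lt_integral_norm_deriv strictMono_div hn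
    (by simpa [hn0.ne'] using hh.isSphericalCurve) hzero
  simp only [Nat.cast_zero, zero_div, div_self hn0.ne'] at length_gt
  linarith [hh.integral_norm_derivWithin_le]

end MemYn

theorem continuousOn_integral_of_continuousOn_integral_norm_sub {α E : Type*}
    [SeminormedAddCommGroup α] [NormedAddCommGroup E] [NormedSpace ℝ E] {S : Set α}
    {β : α → ℝ → E} {a b c d : ℝ} (hac : a ≤ c) (hcd : c ≤ d) (hdb : d ≤ b)
    (hint : ∀ x ∈ S, IntervalIntegrable (β x) volume a b)
    (hcont : ∀ x ∈ S, ∀ ε > (0 : ℝ), ∃ δ > (0 : ℝ), ∀ x' ∈ S,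
      ‖x' - x‖ < δ → (∫ s in a..b, ‖β x' s - β x s‖) < ε) :
    ContinuousOn (fun x => ∫ s in c..d, β x s) S := by
  have hab := hac.trans (hcd.trans hdb)
  have subset : Set.uIcc c d ⊆ Set.uIcc a b := by
    rw [Set.uIcc_of_le hcd, Set.uIcc_of_le hab]
    exact Set.Icc_subset_Icc hac hdb
  refine Metric.continuousOn_iff.mpr fun x hx ε hε => ?_
  obtain ⟨δ, hδ, close⟩ := hcont x hx ε hε
  refine ⟨δ, hδ, fun x' hx' hdist => ?_⟩
  have hsub := (hint x' hx').sub (hint x hx)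
  rw [dist_eq_norm] at hdist
  calc
    dist (∫ s in c..d, β x' s) (∫ s in c..d, β x s) = ‖∫ s in c..d, (β x' s - β x s)‖ := by
      rw [dist_eq_norm, intervalIntegral.integral_sub ((hint x' hx').mono_set subset)
        ((hint x hx).mono_set subset)]
    _ ≤ ∫ s in c..d, ‖β x' s - β x s‖ := intervalIntegral.norm_integral_le_integral_norm hcd
    _ ≤ ∫ s in a..b, ‖β x' s - β x s‖ :=
      intervalIntegral.integral_mono_interval hac hcd hdb
        (Filter.Eventually.of_forall fun _ => norm_nonneg _) hsub.norm
    _ < ε := close x' hx' hdist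

/-- **Upper bound for the coindex.** For `n ≥ 1` there is no map `β : S^{2n} → Y_n`,
continuous for the `L¹`-topology on `Y_n`, with `β(-x) = -β(x)` pointwise;
hence `coind Y_n ≤ 2n - 1`. -/
theorem coindex_Yn_le (n : ℕ) (hn : 1 ≤ n) :
    ¬ ∃ β : EuclideanSpace ℝ (Fin (2 * n + 1)) → (ℝ → ℂ),
      (∀ x ∈ Metric.sphere (0 : EuclideanSpace ℝ (Fin (2 * n + 1))) 1, MemYn n (β x)) ∧
      (∀ x ∈ Metric.sphere (0 : EuclideanSpace ℝ (Fin (2 * n + 1))) 1,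
        β (-x) = fun s => -(β x s)) ∧
      (∀ x ∈ Metric.sphere (0 : EuclideanSpace ℝ (Fin (2 * n + 1))) 1, ∀ ε > (0:ℝ),
        ∃ δ > (0:ℝ), ∀ x' ∈ Metric.sphere (0 : EuclideanSpace ℝ (Fin (2 * n + 1))) 1,
          ‖x' - x‖ < δ → (∫ s in (0:ℝ)..1, ‖β x' s - β x s‖) < ε) := by
  rintro ⟨β, hY, hodd, hcont⟩
  let J (x : EuclideanSpace ℝ (Fin (2 * n + 1))) (j : Fin n) : ℂ :=
    ∫ s in (j / n : ℝ)..((j + 1 : ℕ) / n : ℝ), β x s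
  have J_continuousOn : ContinuousOn J (Metric.sphere 0 1) :=
    continuousOn_pi.mpr fun j => continuousOn_integral_of_continuousOn_integral_norm_sub
      (by positivity) (by gcongr; simp)
      (div_le_one_of_le₀ (by exact_mod_cast j.2) n.cast_nonneg)
      (fun x hx => (hY x hx).1.continuousOn.intervalIntegrable_of_Icc zero_le_one) hcont
  have J_odd : ∀ x ∈ Metric.sphere 0 1, J (-x) = -J x := fun x hx => by
    ext1 j
    simp only [J, hodd x hx, intervalIntegral.integral_neg, Pi.neg_apply]
  obtain ⟨x, hx, J_eq_zero⟩ := borsuk_ulam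
    (by simp [Module.finrank_pi_fintype, Complex.finrank_real_complex, mul_comm])
    J_continuousOn J_odd
  obtain ⟨j, hj, integral_ne_zero⟩ := (hY x hx).exists_integral_ne_zero (by omega)
  exact integral_ne_zero (congrFun J_eq_zero ⟨j, hj⟩)
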